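/- (Proposition 2.) Take the message set to be binary, M = {0,1}. Suppose the observable click probability is independent of Alice's input: Q(a,b) := Σ_{A∈{0,1}} (Σ_i p_i η_i(A,b)) P(A|a) satisfies Q(a₀,b) = Q(a₁,b) for all a₀, a₁ ∈ 𝒜 and all b ∈ ℬ (and Q(a,b) > 0 for all a, b). Then the detection-loophole statistics P_DL(B|a,b) admit a 2-dimensional classical model. In particular, if P_DL does not admit a 2-dimensional classical model, then neither does P(B|a,b) := Σ_{i,A} p_i P_i(B|A,b) P(A|a). -/

import Mathlib

/-- `Q B a b` (the probability of output `B` given inputs `a`, `b`) admits a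
`d`-dimensional classical model: there are a message set of cardinality `d`
(represented by `Fin d`), distributions `S(·|a)` on the messages and
`R(·|A,b)` on the outputs, with `Q(B|a,b) = ∑ A, R(B|A,b) S(A|a)`. -/
def AdmitsClassicalModel {𝒜 ℬ 𝒪 : Type*} [Fintype 𝒜] [Fintype ℬ] [Fintype 𝒪]
    (d : ℕ) (Q : 𝒪 → 𝒜 → ℬ → ℝ) : Prop :=
  ∃ (S : 𝒜 → Fin d → ℝ) (R : Fin d → ℬ → 𝒪 → ℝ),
    (∀ a A, 0 ≤ S a A) ∧ (∀ a, ∑ A, S a A = 1) ∧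
    (∀ A b B, 0 ≤ R A b B) ∧ (∀ A b, ∑ B, R A b B = 1) ∧
    (∀ B a b, Q B a b = ∑ A, R A b B * S a A)

/-- Proposition 2: with a binary message set `M = Fin 2`, if the
observable click probability `Q(a,b) = ∑ A, (∑ i, p i * η i A b) * P(A|a)` is
independent of Alice's input `a` (and positive), then the detection-loophole
statistics `P_DL` admit a 2-dimensional classical model; in particular, if
`P_DL` admits no 2-dimensional classical model, then neither do the no-attack
statistics `P(B|a,b) = ∑ i A, p i * Pᵢ(B|A,b) * P(A|a)`. -/
theorem prop2
    {𝒜 ℬ 𝒪 I : Type*}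
    [Fintype 𝒜] [Fintype ℬ] [Fintype 𝒪] [Fintype I]
    [Nonempty 𝒜] [Nonempty ℬ] [Nonempty 𝒪] [Nonempty I]
    (p : I → ℝ) (hp : ∀ i, 0 ≤ p i) (hp1 : ∑ i, p i = 1)
    (P : 𝒜 → Fin 2 → ℝ) (hP : ∀ a A, 0 ≤ P a A) (hP1 : ∀ a, ∑ A, P a A = 1)
    (Pi : I → Fin 2 → ℬ → 𝒪 → ℝ)
    (hPi : ∀ i A b B, 0 ≤ Pi i A b B) (hPi1 : ∀ i A b, ∑ B, Pi i A b B = 1)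
    (η : I → Fin 2 → ℬ → ℝ) (hη : ∀ i A b, 0 ≤ η i A b ∧ η i A b ≤ 1)
    -- the observable click probability
    (Q : 𝒜 → ℬ → ℝ)
    (hQ : ∀ a b, Q a b = ∑ A, (∑ i, p i * η i A b) * P a A)
    (hQpos : ∀ a b, 0 < Q a b)
    -- hypothesis: the click probability is independent of Alice's input
    (hindep : ∀ (a₀ a₁ : 𝒜) (b : ℬ), Q a₀ b = Q a₁ b)
    -- the detection-loophole statistics
    (PDL : 𝒪 → 𝒜 → ℬ → ℝ)
    (hPDL : ∀ B a b, PDL B a b =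
      (∑ i, ∑ A, p i * η i A b * Pi i A b B * P a A) /
      (∑ i, ∑ A, p i * η i A b * P a A)) :
    AdmitsClassicalModel 2 PDL ∧
    (¬ AdmitsClassicalModel 2 PDL →
      ¬ AdmitsClassicalModel 2
        (fun B a b => ∑ i, ∑ A, p i * Pi i A b B * P a A)) := by
  have key : AdmitsClassicalModel 2 PDL := by
    obtain ⟨e, he⟩ : ∃ e : Fin 2 → ℬ → ℝ, ∀ A b, e A b = ∑ i, p i * η i A b :=
      ⟨_, fun _ _ => rfl⟩
    obtain ⟨N, hN⟩ : ∃ N : Fin 2 → ℬ → 𝒪 → ℝ,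
        ∀ A b B, N A b B = ∑ i, p i * η i A b * Pi i A b B := ⟨_, fun _ _ _ => rfl⟩
    have hN0 : ∀ A b B, 0 ≤ N A b B := fun A b B => by
      rw [hN]
      exact Finset.sum_nonneg fun i _ =>
        mul_nonneg (mul_nonneg (hp i) (hη i A b).1) (hPi i A b B)
    have hNe : ∀ A b, ∑ B, N A b B = e A b := fun A b => by
      simp only [hN, he]
      rw [Finset.sum_comm]
      refine Finset.sum_congr rfl fun i _ => ?_
      rw [← Finset.mul_sum, hPi1, mul_one]
    have hQe : ∀ a b, Q a b = e 0 b * P a 0 + e 1 b * P a 1 := fun a b => by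
      rw [hQ, Fin.sum_univ_two, he, he]
    have hD : ∀ B a b, PDL B a b = (N 0 b B * P a 0 + N 1 b B * P a 1) / Q a b := by
      intro B a b
      rw [hPDL, hQe]
      congr 1
      · rw [Finset.sum_comm, Fin.sum_univ_two, hN, hN, Finset.sum_mul, Finset.sum_mul]
      · rw [Finset.sum_comm, Fin.sum_univ_two, he, he, Finset.sum_mul, Finset.sum_mul]
    have hP2 : ∀ a, P a 1 = 1 - P a 0 := fun a => by
      have := hP1 a
      rw [Fin.sum_univ_two] at this
      linarith
    by_cases hc : ∀ a a', P a 0 = P a' 0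
    · obtain ⟨a0⟩ := ‹Nonempty 𝒜›
      refine ⟨P, fun _ b B => PDL B a0 b, hP, hP1, fun _ b B => ?_, fun _ b => ?_,
        fun B a b => ?_⟩
      · dsimp only
        rw [hD]
        exact div_nonneg (add_nonneg (mul_nonneg (hN0 _ _ _) (hP _ _))
          (mul_nonneg (hN0 _ _ _) (hP _ _))) (hQpos _ _).le
      · simp only [hD]
        rw [← Finset.sum_div, Finset.sum_add_distrib, ← Finset.sum_mul, ← Finset.sum_mul,
          hNe, hNe, ← hQe]
        exact div_self (hQpos _ _).ne'
      · rw [← Finset.mul_sum, hP1, mul_one, hD, hD, hP2 a, hP2 a0, hc a a0, hindep a a0]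
    · push Not at hc
      obtain ⟨a0, a1, hne⟩ := hc
      have heq : ∀ b, e 0 b = e 1 b := fun b => by
        have h := hindep a0 a1 b
        rw [hQe, hQe, hP2, hP2] at h
        have h2 : (e 0 b - e 1 b) * (P a0 0 - P a1 0) = 0 := by linarith
        rcases mul_eq_zero.1 h2 with h3 | h3
        · linarith
        · exact absurd (sub_eq_zero.1 h3) hne
      have hQ1 : ∀ a b, Q a b = e 1 b := fun a b => by
        rw [hQe, heq, hP2]; ring
      have hA : ∀ A b, e A b = e 1 b := fun A b => by
        fin_cases A
        · exact heq b
        · rfl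
      have hpos : ∀ b, 0 < e 1 b := fun b => hQ1 a0 b ▸ hQpos a0 b
      refine ⟨P, fun A b B => N A b B / e 1 b, hP, hP1,
        fun A b B => div_nonneg (hN0 _ _ _) (hpos b).le, fun A b => ?_, fun B a b => ?_⟩
      · rw [← Finset.sum_div, hNe, hA]
        exact div_self (hpos b).ne'
      · rw [hD, hQ1, Fin.sum_univ_two]
        ring
  exact ⟨key, fun h => absurd key h⟩
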